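/- For $\varepsilon\in[0,1]$ and a binary string $b=(b_1,\dots,b_m)\in\{0,1\}^m$, define $Z^{(b)}(\varepsilon)\in[0,1]$ recursively by $Z^{(\emptyset)}(\varepsilon)=\varepsilon$ and, writing $b'=(b_1,\dots,b_{m-1})$, $Z^{(b)}(\varepsilon)=\bigl(Z^{(b')}(\varepsilon)\bigr)^2$ if $b_m=1$ and $Z^{(b)}(\varepsilon)=2Z^{(b')}(\varepsilon)-\bigl(Z^{(b')}(\varepsilon)\bigr)^2$ if $b_m=0$; these are the erasure probabilities of the $2^m$ synthetic channels obtained by polarizing a binary erasure channel $\mathrm{BEC}(\varepsilon)$. A real number $\mu>0$ is called an upper bound on the scaling exponent of the BEC if there exists a function $h:[0,1]\to[0,1]$, continuous on $(0,1)$, with $h(0)=h(1)=0$, $h(x)>0$ for all $x\in(0,1)$, and $$\sup_{x\in(0,1)}\frac{h(x^2)+h(2x-x^2)}{2h(x)}<2^{-1/\mu}.$$ Let $\mu\ge 2$ be an upper bound on the scaling exponent of the BEC. Then there exists a constant $c_1>0$, independent of $m$ and $\varepsilon$, such that for every $\varepsilon\in[0,1]$ and every integer $m\ge 0$, $$2^{-m}\cdot\#\bigl\{b\in\{0,1\}^m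 : Z^{(b)}(\varepsilon)\le 2^{-10m}\bigr\}\ \ge\ 1-\varepsilon-c_1\,2^{-m/\mu}.$$ Equivalently, if $Z_m$ denotes the value $Z^{(B)}(\varepsilon)$ for $B$ drawn uniformly at random from $\{0,1\}^m$, then $\mathbb P(Z_m\le 2^{-10m})\ge 1-\varepsilon-c_1\,2^{-m/\mu}$. -/

import Mathlib

/-- One polarization step for the binary erasure channel: the erasure probability `z`
maps to `z²` (good channel, bit `1`) or `2z − z²` (bad channel, bit `0`). -/
def polarStep (b : Bool) (z : ℝ) : ℝ := if b then z ^ 2 else 2 * z - z ^ 2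

/-- Erasure probability `Z^{(b)}(ε)` of the synthetic channel indexed by the binary
string `b = (b₁,…,b_m)`, obtained from `BEC(ε)`: the bits are applied in order,
`Z^{(b)}(ε) = polarStep b_m (Z^{(b₁,…,b_{m−1})}(ε))`. -/
def polarZ (ε : ℝ) {m : ℕ} (b : Fin m → Bool) : ℝ :=
  (List.ofFn b).foldl (fun z bit => polarStep bit z) ε

/-- `μ` is an upper bound on the scaling exponent of the BEC: there is a function
`h : [0,1] → [0,1]`, continuous on `(0,1)`, with `h(0) = h(1) = 0`, `h > 0` on `(0,1)`, and
`sup_{x∈(0,1)} (h(x²) + h(2x − x²))/(2h(x)) < 2^{−1/μ}`. The values of `h` outside `[0,1]`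
play no role. -/
def IsScalingExponentUB (μ : ℝ) : Prop :=
  ∃ h : ℝ → ℝ,
    (∀ x ∈ Set.Icc (0:ℝ) 1, h x ∈ Set.Icc (0:ℝ) 1) ∧
    ContinuousOn h (Set.Ioo (0:ℝ) 1) ∧
    h 0 = 0 ∧ h 1 = 0 ∧ (∀ x ∈ Set.Ioo (0:ℝ) 1, 0 < h x) ∧
    ∃ s : ℝ, s < (2:ℝ) ^ (-(1 / μ)) ∧
      ∀ x ∈ Set.Ioo (0:ℝ) 1, (h (x ^ 2) + h (2 * x - x ^ 2)) / (2 * h x) ≤ s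

lemma polarZ_cons (ε : ℝ) {m : ℕ} (b : Bool) (v : Fin m → Bool) :
    polarZ ε (Fin.cons b v : Fin (m + 1) → Bool) = polarZ (polarStep b ε) v := by
  simp [polarZ, List.ofFn_succ]

lemma polarStep_mem_Icc (b : Bool) {z : ℝ} (hz : z ∈ Set.Icc (0:ℝ) 1) :
    polarStep b z ∈ Set.Icc (0:ℝ) 1 := by
  obtain ⟨h0, h1⟩ := hz
  cases b
  · simp only [polarStep, Bool.false_eq_true, if_false]
    constructor <;> nlinarith
  · simp only [polarStep, if_true]
    constructor <;> nlinarith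

lemma polarZ_mem_Icc {ε : ℝ} (hε : ε ∈ Set.Icc (0:ℝ) 1) {m : ℕ} (b : Fin m → Bool) :
    polarZ ε b ∈ Set.Icc (0:ℝ) 1 := by
  induction m generalizing ε with
  | zero => simpa [polarZ] using hε
  | succ m ih =>
    rw [← Fin.cons_self_tail b, polarZ_cons]
    exact ih (polarStep_mem_Icc _ hε) _

lemma sum_polarZ_succ (g : ℝ → ℝ) (ε : ℝ) (m : ℕ) :
    ∑ b : Fin (m + 1) → Bool, g (polarZ ε b) =
      ∑ b : Fin m → Bool, g (polarZ (ε ^ 2) b) +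
        ∑ b : Fin m → Bool, g (polarZ (2 * ε - ε ^ 2) b) := by
  rw [← (Fin.consEquiv fun _ : Fin (m + 1) => Bool).sum_comp, Fintype.sum_prod_type,
    Fintype.sum_bool]
  simp [Fin.consEquiv, polarZ_cons, polarStep]

/-- A function contracted by a factor `s` under one averaged polarization step is contracted by
`s ^ m` under `m` steps. -/
lemma sum_polarZ_le {g : ℝ → ℝ} {s : ℝ} (hs : 0 ≤ s)
    (hg : ∀ x ∈ Set.Icc (0:ℝ) 1, g (x ^ 2) + g (2 * x - x ^ 2) ≤ 2 * s * g x)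
    {ε : ℝ} (hε : ε ∈ Set.Icc (0:ℝ) 1) (m : ℕ) :
    ∑ b : Fin m → Bool, g (polarZ ε b) ≤ (2 * s) ^ m * g ε := by
  induction m generalizing ε with
  | zero => simp [polarZ]
  | succ m ih =>
    have h1 : ε ^ 2 ∈ Set.Icc (0:ℝ) 1 := by simpa [polarStep] using polarStep_mem_Icc true hε
    have h2 : 2 * ε - ε ^ 2 ∈ Set.Icc (0:ℝ) 1 := by
      simpa [polarStep] using polarStep_mem_Icc false hε
    calc _ ≤ (2 * s) ^ m * g (ε ^ 2) + (2 * s) ^ m * g (2 * ε - ε ^ 2) := by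
          rw [sum_polarZ_succ]; exact add_le_add (ih h1) (ih h2)
      _ = (2 * s) ^ m * (g (ε ^ 2) + g (2 * ε - ε ^ 2)) := by ring
      _ ≤ (2 * s) ^ m * (2 * s * g ε) := by
          gcongr; exact hg ε hε
      _ = _ := by ring

/-- The test function `(x (1 - x)) ^ α`. -/
noncomputable def bump (α x : ℝ) : ℝ := (x * (1 - x)) ^ α

/-- The factor by which `bump α` is scaled, up to `2`, by an averaged polarization step. -/
noncomputable def bumpRatio (α x : ℝ) : ℝ := (x * (1 + x)) ^ α + ((2 - x) * (1 - x)) ^ α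

lemma bump_nonneg (α : ℝ) {x : ℝ} (hx : x ∈ Set.Icc (0:ℝ) 1) : 0 ≤ bump α x :=
  Real.rpow_nonneg (mul_nonneg hx.1 (sub_nonneg.2 hx.2)) _

lemma bump_le_one {α : ℝ} (hα : 0 ≤ α) {x : ℝ} (hx : x ∈ Set.Icc (0:ℝ) 1) : bump α x ≤ 1 :=
  Real.rpow_le_one (mul_nonneg hx.1 (sub_nonneg.2 hx.2)) (by nlinarith [hx.1, hx.2]) hα

lemma bump_step (α : ℝ) {x : ℝ} (hx : x ∈ Set.Icc (0:ℝ) 1) :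
    bump α (x ^ 2) + bump α (2 * x - x ^ 2) = bumpRatio α x * bump α x := by
  obtain ⟨h0, h1⟩ := hx
  have h2 : 0 ≤ 1 - x := sub_nonneg.2 h1
  have h3 : 0 ≤ x * (1 - x) := mul_nonneg h0 h2
  rw [bumpRatio, bump, bump, bump, add_mul, ← Real.mul_rpow (by positivity) h3,
    ← Real.mul_rpow (mul_nonneg (by linarith) h2) h3]
  congr 2 <;> ring

lemma bumpRatio_le_four {α : ℝ} (hα : 0 ≤ α) (hα1 : α ≤ 1) {x : ℝ}
    (hx : x ∈ Set.Icc (0:ℝ) 1) : bumpRatio α x ≤ 4 := by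
  obtain ⟨h0, h1⟩ := hx
  have key : ∀ y : ℝ, 0 ≤ y → y ≤ 2 → y ^ α ≤ 2 := fun y hy hy2 =>
    calc y ^ α ≤ 2 ^ α := Real.rpow_le_rpow hy hy2 hα
      _ ≤ 2 ^ (1:ℝ) := Real.rpow_le_rpow_of_exponent_le one_le_two hα1
      _ = 2 := Real.rpow_one 2
  have := key (x * (1 + x)) (by positivity) (by nlinarith)
  have := key ((2 - x) * (1 - x)) (by nlinarith) (by nlinarith)
  rw [bumpRatio]; linarith

lemma continuous_bumpRatio {α : ℝ} (hα : 0 ≤ α) : Continuous (bumpRatio α) := by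
  unfold bumpRatio
  exact ((continuous_id.mul (continuous_const.add continuous_id)).rpow_const fun _ => Or.inr hα).add
    (((continuous_const.sub continuous_id).mul (continuous_const.sub continuous_id)).rpow_const
      fun _ => Or.inr hα)

lemma bumpRatio_zero {α : ℝ} (hα : 0 < α) : bumpRatio α 0 = 2 ^ α := by
  simp [bumpRatio, Real.zero_rpow hα.ne']

lemma bumpRatio_one {α : ℝ} (hα : 0 < α) : bumpRatio α 1 = 2 ^ α := by
  simp [bumpRatio, Real.zero_rpow hα.ne']; norm_num

lemma exists_bumpRatio_le {α r : ℝ} (hα : 0 < α) (hr : 2 ^ α < r) :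
    ∃ η > 0, ∀ x : ℝ, x < η ∨ 1 - η < x → x ∈ Set.Icc (0:ℝ) 1 → bumpRatio α x ≤ r := by
  have hc := continuous_bumpRatio hα.le
  have e0 := (hc.tendsto 0).eventually_lt_const (u := r) (by rwa [bumpRatio_zero hα])
  have e1 := (hc.tendsto 1).eventually_lt_const (u := r) (by rwa [bumpRatio_one hα])
  obtain ⟨a, ha, h0⟩ := Metric.eventually_nhds_iff.1 e0
  obtain ⟨b, hb, h1⟩ := Metric.eventually_nhds_iff.1 e1
  refine ⟨min a b, lt_min ha hb, fun x hx hx1 => ?_⟩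
  rcases hx with hx | hx
  · refine (h0 ?_).le
    rw [Real.dist_eq, sub_zero, abs_of_nonneg hx1.1]
    exact hx.trans_le (min_le_left _ _)
  · refine (h1 ?_).le
    rw [Real.dist_eq, abs_sub_comm, abs_of_nonneg (sub_nonneg.2 hx1.2)]
    linarith [min_le_right a b]

lemma exists_pos_le_of_continuousOn_Ioo {h : ℝ → ℝ} (hc : ContinuousOn h (Set.Ioo (0:ℝ) 1))
    (hpos : ∀ x ∈ Set.Ioo (0:ℝ) 1, 0 < h x) {η : ℝ} (hη : 0 < η) :
    ∃ c > 0, ∀ x ∈ Set.Icc η (1 - η), c ≤ h x := by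
  have hsub : Set.Icc η (1 - η) ⊆ Set.Ioo (0:ℝ) 1 := fun x hx =>
    ⟨hη.trans_le hx.1, by linarith [hx.2]⟩
  rcases (Set.Icc η (1 - η)).eq_empty_or_nonempty with he | hne
  · exact ⟨1, one_pos, by simp [he]⟩
  · obtain ⟨y, hy, hmin⟩ := isCompact_Icc.exists_isMinOn hne (hc.mono hsub)
    exact ⟨h y, hpos y (hsub hy), fun x hx => hmin hx⟩

/-- Adding a small multiple of `bump α` to a function contracted by a factor `s` yields a function
contracted by any prescribed `s' > s`, provided that `s' > 2 ^ α / 2`. -/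
lemma exists_add_bump_contraction {h : ℝ → ℝ} {s s' α : ℝ}
    (hc : ContinuousOn h (Set.Ioo (0:ℝ) 1)) (h0 : h 0 = 0) (h1 : h 1 = 0)
    (hpos : ∀ x ∈ Set.Ioo (0:ℝ) 1, 0 < h x)
    (hstep : ∀ x ∈ Set.Ioo (0:ℝ) 1, h (x ^ 2) + h (2 * x - x ^ 2) ≤ 2 * s * h x)
    (hss : s < s') (hα : 0 < α) (hα1 : α ≤ 1) (hαs : 2 ^ α < 2 * s') :
    ∃ δ > 0, ∀ x ∈ Set.Icc (0:ℝ) 1,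
      (h (x ^ 2) + δ * bump α (x ^ 2)) +
        (h (2 * x - x ^ 2) + δ * bump α (2 * x - x ^ 2)) ≤ 2 * s' * (h x + δ * bump α x) := by
  obtain ⟨η, hη, hend⟩ := exists_bumpRatio_le hα hαs
  obtain ⟨c, hcpos, hmid⟩ := exists_pos_le_of_continuousOn_Ioo hc hpos hη
  have hs0 : 0 < s' := by linarith [Real.rpow_pos_of_pos (zero_lt_two (α := ℝ)) α]
  have hd : 0 < s' - s := sub_pos.2 hss
  refine ⟨(s' - s) * c / 2, by positivity, fun x hx => ?_⟩
  set δ := (s' - s) * c / 2 with hδ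
  have hδ0 : 0 < δ := by positivity
  have hb := bump_step α hx
  have hb0 := bump_nonneg α hx
  have hh : h (x ^ 2) + h (2 * x - x ^ 2) ≤ 2 * s * h x := by
    rcases hx.1.eq_or_lt with rfl | hx0
    · simp [h0]
    rcases hx.2.eq_or_lt with rfl | hx1
    · norm_num [h1]
    exact hstep x ⟨hx0, hx1⟩
  have hhx : 0 ≤ h x := by
    rcases hx.1.eq_or_lt with rfl | hx0
    · exact h0.ge
    rcases hx.2.eq_or_lt with rfl | hx1
    · exact h1.ge
    exact (hpos x ⟨hx0, hx1⟩).le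
  have split : (h (x ^ 2) + δ * bump α (x ^ 2)) +
      (h (2 * x - x ^ 2) + δ * bump α (2 * x - x ^ 2)) =
      (h (x ^ 2) + h (2 * x - x ^ 2)) + δ * (bumpRatio α x * bump α x) := by
    rw [← hb]; ring
  rw [split]
  by_cases hxe : x < η ∨ 1 - η < x
  · have hr := mul_le_mul_of_nonneg_left
      (mul_le_mul_of_nonneg_right (hend x hxe hx) hb0) hδ0.le
    have := mul_nonneg hd.le hhx
    linarith
  · push Not at hxe
    have hr := mul_le_mul_of_nonneg_left
      (mul_le_mul (bumpRatio_le_four hα.le hα1 hx) (bump_le_one hα.le hx) hb0 (by norm_num)) hδ0.le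
    have := mul_le_mul_of_nonneg_left (hmid x hxe) hd.le
    have : 0 ≤ s' * (δ * bump α x) := by positivity
    linarith

lemma one_le_add_bump {α t z : ℝ} (hα : 0 < α) (hα1 : α ≤ 1) (ht : 0 < t) (hz : z ≤ 1)
    (htz : t < z) : 1 ≤ z + t ^ (-α) * bump α z := by
  have hz1 : 0 ≤ 1 - z := sub_nonneg.2 hz
  have hz0 : 0 ≤ z := (ht.trans htz).le
  have e1 : 1 - z ≤ (1 - z) ^ α := by
    simpa using Real.rpow_le_rpow_of_exponent_ge' hz1 (by linarith) hα.le hα1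
  have e2 : 1 ≤ t ^ (-α) * z ^ α := by
    rw [Real.rpow_neg ht.le, ← Real.inv_rpow ht.le, ← Real.mul_rpow (inv_nonneg.2 ht.le) hz0]
    refine Real.one_le_rpow ?_ hα.le
    rw [inv_mul_eq_div, one_le_div ht]
    exact htz.le
  have e3 : 0 ≤ (1 - z) ^ α := Real.rpow_nonneg hz1 _
  rw [bump, Real.mul_rpow hz0 hz1, ← mul_assoc]
  have := mul_le_mul_of_nonneg_right e2 e3
  linarith

/-- If the sum of `bump α` over all synthetic channels is at most `B`, all but roughly a fraction
`ε` of these have erasure probability at most `t`. -/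
lemma card_polarZ_le_ge {α t ε B : ℝ} (hα : 0 < α) (hα1 : α ≤ 1) (ht : 0 < t)
    (hε : ε ∈ Set.Icc (0:ℝ) 1) {m : ℕ} (hB : ∑ b : Fin m → Bool, bump α (polarZ ε b) ≤ B) :
    2 ^ m - 2 ^ m * ε - t ^ (-α) * B ≤
      ((Finset.univ.filter fun b : Fin m → Bool => polarZ ε b ≤ t).card : ℝ) := by
  have hpt : ∀ b : Fin m → Bool, 1 ≤ (if polarZ ε b ≤ t then (1:ℝ) else 0) +
      (polarZ ε b + t ^ (-α) * bump α (polarZ ε b)) := by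
    intro b
    have hb := polarZ_mem_Icc hε b
    split_ifs with hbt
    · have := bump_nonneg α hb
      have := Real.rpow_nonneg ht.le (-α)
      have := hb.1
      have : 0 ≤ polarZ ε b + t ^ (-α) * bump α (polarZ ε b) := by positivity
      linarith
    · rw [zero_add]
      exact one_le_add_bump hα hα1 ht hb.2 (not_le.1 hbt)
  have hsum := Finset.sum_le_sum fun b (_ : b ∈ Finset.univ) => hpt b
  rw [Finset.sum_add_distrib, Finset.sum_add_distrib, ← Finset.mul_sum, Finset.sum_boole] at hsum
  have hmean : ∑ b : Fin m → Bool, polarZ ε b ≤ 2 ^ m * ε := by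
    simpa using sum_polarZ_le (g := fun x => x) zero_le_one
      (fun x _ => le_of_eq (by ring)) hε m
  have hmul := mul_le_mul_of_nonneg_left hB (Real.rpow_nonneg ht.le (-α))
  have hcard : ∑ _b : Fin m → Bool, (1:ℝ) = 2 ^ m := by simp
  rw [hcard] at hsum
  linarith

lemma uniformOn_univ_real (m : ℕ) (p : (Fin m → Bool) → Prop) [DecidablePred p] :
    (ProbabilityTheory.uniformOn (Set.univ : Set (Fin m → Bool))).real {b | p b} =
      ((Finset.univ.filter p).card : ℝ) / 2 ^ m := by
  rw [MeasureTheory.measureReal_def, ProbabilityTheory.uniformOn_univ,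
    MeasureTheory.Measure.count_apply (Set.toFinite _).measurableSet]
  have : {b | p b} = ((Finset.univ.filter p : Finset (Fin m → Bool)) : Set (Fin m → Bool)) := by
    ext; simp
  rw [this, Set.encard_coe_eq_coe_finsetCard]
  simp

/-- A strictly subcritical factor and a small exponent leaving room for the losses. -/
lemma exists_exponent {s l : ℝ} (hsl : s < l) (hl : 1 / 2 < l) :
    ∃ s' α : ℝ, s < s' ∧ 0 < α ∧ α ≤ 1 ∧ 2 ^ α < 2 * s' ∧ 2 ^ (10 * α) * s' ≤ l := by
  obtain ⟨s', hs', hs'l⟩ := exists_between (max_lt hsl hl)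
  obtain ⟨hs1, hs2⟩ := max_lt_iff.1 hs'
  have c1 : Continuous fun α : ℝ => (2:ℝ) ^ α := Real.continuous_const_rpow two_ne_zero
  have c2 : Continuous fun α : ℝ => (2:ℝ) ^ (10 * α) * s' :=
    (c1.comp (continuous_const.mul continuous_id)).mul continuous_const
  have e1 := (c1.tendsto 0).eventually_lt_const (u := 2 * s') (by norm_num; linarith)
  have e2 := (c2.tendsto 0).eventually_lt_const (u := l) (by simpa using hs'l)
  have e3 := (continuous_id.tendsto (0:ℝ)).eventually_lt_const (u := 1) (by simp)
  have e4 : ∀ᶠ α : ℝ in nhdsWithin 0 (Set.Ioi 0), 0 < α := self_mem_nhdsWithin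
  obtain ⟨α, ⟨⟨h1, h2⟩, h3⟩, h4⟩ :=
    ((((e1.and e2).and e3).filter_mono nhdsWithin_le_nhds).and e4).exists
  exact ⟨s', α, hs1, h4, h3.le, h1, h2.le⟩

lemma half_lt_two_rpow_neg_one_div {μ : ℝ} (hμ : 2 ≤ μ) : 1 / 2 < (2:ℝ) ^ (-(1 / μ)) := by
  have h : (2:ℝ) ^ (-1 : ℝ) < 2 ^ (-(1 / μ)) := by
    refine Real.rpow_lt_rpow_of_exponent_lt one_lt_two (neg_lt_neg ?_)
    rw [div_lt_one (by linarith)]; linarith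
  rwa [Real.rpow_neg_one, inv_eq_one_div] at h


/-- If `μ ≥ 2` is an upper bound on the scaling exponent of the BEC, then there is a constant
`c₁ > 0` such that for all `ε ∈ [0,1]` and all `m ≥ 0`, the fraction of synthetic channels with
erasure probability at most `2^{−10m}` is at least `1 − ε − c₁ 2^{−m/μ}`; in probabilistic form,
the same bound holds for the probability, under a uniformly random string `b ∈ {0,1}^m`, that
`Z^{(b)}(ε) ≤ 2^{−10m}`. -/
theorem fraction_of_good_channels (μ : ℝ) (hμ : 2 ≤ μ) (hscal : IsScalingExponentUB μ) :
    ∃ c₁ : ℝ, 0 < c₁ ∧ ∀ ε ∈ Set.Icc (0:ℝ) 1, ∀ m : ℕ,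
      (((Finset.univ.filter (fun b : Fin m → Bool =>
          polarZ ε b ≤ (2:ℝ) ^ (-(10 * (m:ℝ))))).card : ℝ) / 2 ^ m) ≥
        1 - ε - c₁ * (2:ℝ) ^ (-((m:ℝ) / μ)) ∧
      (ProbabilityTheory.uniformOn (Set.univ : Set (Fin m → Bool))).real
          {b | polarZ ε b ≤ (2:ℝ) ^ (-(10 * (m:ℝ)))} ≥
        1 - ε - c₁ * (2:ℝ) ^ (-((m:ℝ) / μ)) := by
  obtain ⟨h, hI, hc, h0, h1, hpos, s, hs, hsup⟩ := hscal
  obtain ⟨s', α, hss, hα, hα1, hαs, hαl⟩ := exists_exponent hs (half_lt_two_rpow_neg_one_div hμ)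
  have hs'0 : 0 < s' := by linarith [Real.rpow_pos_of_pos (zero_lt_two (α := ℝ)) α]
  have hstep : ∀ x ∈ Set.Ioo (0:ℝ) 1, h (x ^ 2) + h (2 * x - x ^ 2) ≤ 2 * s * h x := by
    intro x hx
    have := hsup x hx
    rw [div_le_iff₀ (mul_pos two_pos (hpos x hx))] at this
    linarith
  obtain ⟨δ, hδ, hg⟩ := exists_add_bump_contraction hc h0 h1 hpos hstep hss hα hα1 hαs
  have main : ∀ ε ∈ Set.Icc (0:ℝ) 1, ∀ m : ℕ,
      1 - ε - (1 + δ) / δ * (2:ℝ) ^ (-((m:ℝ) / μ)) ≤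
        ((Finset.univ.filter (fun b : Fin m → Bool =>
          polarZ ε b ≤ (2:ℝ) ^ (-(10 * (m:ℝ))))).card : ℝ) / 2 ^ m := by
    intro ε hε m
    have hB : ∑ b : Fin m → Bool, bump α (polarZ ε b) ≤ (2 * s') ^ m * ((1 + δ) / δ) := by
      have hsum := sum_polarZ_le (g := fun x => h x + δ * bump α x) hs'0.le hg hε m
      rw [Finset.sum_add_distrib, ← Finset.mul_sum] at hsum
      have hnn : 0 ≤ ∑ b : Fin m → Bool, h (polarZ ε b) :=
        Finset.sum_nonneg fun b _ => (hI _ (polarZ_mem_Icc hε b)).1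
      have hle : h ε + δ * bump α ε ≤ 1 + δ := by
        have := mul_le_mul_of_nonneg_left (bump_le_one hα.le hε) hδ.le
        linarith [(hI ε hε).2]
      have := mul_le_mul_of_nonneg_left hle (pow_nonneg (mul_pos two_pos hs'0).le m)
      rw [mul_div_assoc', le_div_iff₀ hδ]
      linarith
    have hcard := card_polarZ_le_ge hα hα1
      (Real.rpow_pos_of_pos two_pos (-(10 * (m:ℝ)))) hε hB
    have hpow : ((2:ℝ) ^ (-(10 * (m:ℝ)))) ^ (-α) * s' ^ m ≤ (2:ℝ) ^ (-((m:ℝ) / μ)) := by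
      have e1 : ((2:ℝ) ^ (-(10 * (m:ℝ)))) ^ (-α) = ((2:ℝ) ^ (10 * α)) ^ m := by
        rw [← Real.rpow_mul two_pos.le, ← Real.rpow_mul_natCast two_pos.le]
        congr 1; ring
      have e2 : (2:ℝ) ^ (-((m:ℝ) / μ)) = ((2:ℝ) ^ (-(1 / μ))) ^ m := by
        rw [← Real.rpow_mul_natCast two_pos.le]
        congr 1; ring
      rw [e1, e2, ← mul_pow]
      exact pow_le_pow_left₀ (by positivity) hαl m
    rw [le_div_iff₀ (by positivity)]
    have hmul := mul_le_mul_of_nonneg_left hpow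
      (show 0 ≤ (2:ℝ) ^ m * ((1 + δ) / δ) by positivity)
    refine le_trans ?_ hcard
    rw [mul_pow]
    linarith
  refine ⟨(1 + δ) / δ, by positivity, fun ε hε m => ⟨main ε hε m, ?_⟩⟩
  rw [uniformOn_univ_real]
  exact main ε hε m
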